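/- Let p > 1 and a, b, L > 0, and let λ be a Dirichlet eigenvalue of −Δ^{a,b}_p on (0,L) with λ ≠ λ^{a,b}_{1,p}(0,L). Then every eigenfunction associated to λ changes sign: if u is a nontrivial C¹ weak solution of −Δ^{a,b}_p u = λ |u|^{p−2} u on (0,L) with u(0) = u(L) = 0, then there exist t₁, t₂ ∈ (0,L) with u(t₁) > 0 and u(t₂) < 0. -/

import Mathlib

open Set

/-- `u` is C¹ on `[α, γ]` with derivative `u'` there. -/
def C1On (α γ : ℝ) (u u' : ℝ → ℝ) : Prop :=
  (∀ t ∈ Set.Icc α γ, HasDerivWithinAt u (u' t) (Set.Icc α γ) t) ∧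
  ContinuousOn u' (Set.Icc α γ)

/-- Admissible functions on `[0, L]`: C¹ with zero boundary values. -/
def Adm (L : ℝ) (u u' : ℝ → ℝ) : Prop :=
  C1On 0 L u u' ∧ u 0 = 0 ∧ u L = 0

/-- The asymmetric energy integrand `a^p (s⁺)^p + b^p (s⁻)^p`. -/
noncomputable def asymE (p a b s : ℝ) : ℝ :=
  a ^ p * (max s 0) ^ p + b ^ p * (max (-s) 0) ^ p

/-- The asymmetric flux `a^p (s⁺)^(p-1) - b^p (s⁻)^(p-1)`. -/
noncomputable def asymFlux (p a b s : ℝ) : ℝ :=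
  a ^ p * (max s 0) ^ (p - 1) - b ^ p * (max (-s) 0) ^ (p - 1)

/-- The first Dirichlet eigenvalue `λ^{a,b}_{1,p}(0,L)`, as the infimum of the
asymmetric energy over normalized admissible functions. -/
noncomputable def lam1 (p a b L : ℝ) : ℝ :=
  sInf { E : ℝ | ∃ u u' : ℝ → ℝ, Adm L u u' ∧
    (∫ t in (0:ℝ)..L, |u t| ^ p) = 1 ∧
    E = ∫ t in (0:ℝ)..L, asymE p a b (u' t) }

/-- `u` (a C¹ function on `[0,L]` with derivative `u'` and zero boundary values)
is a weak solution of `-Δ^{a,b}_p u = g` on `(0,L)`. -/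
def IsWeakSol (p a b L : ℝ) (u u' g : ℝ → ℝ) : Prop :=
  Adm L u u' ∧
  ∀ φ φ' : ℝ → ℝ, Adm L φ φ' →
    (∫ t in (0:ℝ)..L, asymFlux p a b (u' t) * φ' t) =
      ∫ t in (0:ℝ)..L, g t * φ t

/-!
Let `u` be a nonnegative nontrivial solution. Testing the equation with `u` gives `0 ≤ lam`, so the
flux `asymFlux p a b u'` is nonincreasing, hence `u` is concave, hence positive inside `(0, L)`.
Testing with `(v⁺)^p / (u + ε)^(p - 1)` and letting `ε → 0`, Picone's inequality bounds
`lam * ∫ (v⁺)^p` by the energy of `v` on `{v > 0}`. The reflection `u (L - t)` solves the equation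
with `a` and `b` exchanged and bounds `lam * ∫ (v⁻)^p` by the energy on `{v < 0}` in the same way.
So `lam` is the minimum of the Rayleigh quotient, attained at `u`. A nonpositive solution reduces
to this case by passing to `-u (L - t)`, which solves the same equation as `u`.
-/

section Integrand

variable {p a b : ℝ}

lemma abs_rpow_sub_two_mul (hp : 1 < p) {x : ℝ} (hx : 0 ≤ x) :
    |x| ^ (p - 2) * x = x ^ (p - 1) := by
  rw [abs_of_nonneg hx, ← Real.rpow_add_one' hx (by linarith)]
  ring_nf

lemma max_zero_rpow_sub_one_mul (hp : 1 < p) (x : ℝ) :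
    max x 0 ^ (p - 1) * x = max x 0 ^ p := by
  rcases le_or_gt x 0 with hx | hx
  · rw [max_eq_right hx, Real.zero_rpow (by linarith), Real.zero_rpow (by linarith), zero_mul]
  · rw [max_eq_left hx.le, Real.rpow_sub_one hx.ne', div_mul_cancel₀ _ hx.ne']

lemma max_zero_rpow_add_max_neg_zero_rpow (hp : p ≠ 0) (x : ℝ) :
    max x 0 ^ p + max (-x) 0 ^ p = |x| ^ p := by
  rcases le_total 0 x with hx | hx
  · rw [max_eq_left hx, max_eq_right (neg_nonpos.2 hx), abs_of_nonneg hx, Real.zero_rpow hp,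
      add_zero]
  · rw [max_eq_right hx, max_eq_left (neg_nonneg.2 hx), abs_of_nonpos hx, Real.zero_rpow hp,
      zero_add]

lemma hasDerivAt_max_zero_rpow (hp : 1 < p) (x : ℝ) :
    HasDerivAt (fun y : ℝ => max y 0 ^ p) (p * max x 0 ^ (p - 1)) x := by
  refine hasDerivAt_of_hasDerivAt_of_ne' (x := 0)
    (g := fun y => p * max y 0 ^ (p - 1)) (fun y hy => ?_) ?_ ?_ x
  · rcases hy.lt_or_gt with hneg | hpos
    · rw [max_eq_right hneg.le, Real.zero_rpow (by linarith), mul_zero]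
      refine (hasDerivAt_const y (0 : ℝ)).congr_of_eventuallyEq ?_
      filter_upwards [Iio_mem_nhds hneg] with z hz
      rw [max_eq_right (le_of_lt hz), Real.zero_rpow (by linarith)]
    · rw [max_eq_left hpos.le]
      refine (Real.hasDerivAt_rpow_const (Or.inr hp.le)).congr_of_eventuallyEq ?_
      filter_upwards [Ioi_mem_nhds hpos] with z hz
      rw [max_eq_left (le_of_lt hz)]
  · exact (continuousAt_id.max continuousAt_const).rpow_const (Or.inr (by linarith))
  · exact ((continuousAt_id.max continuousAt_const).rpow_const
      (Or.inr (by linarith))).const_mul p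

lemma asymE_nonneg (ha : 0 ≤ a) (hb : 0 ≤ b) (s : ℝ) : 0 ≤ asymE p a b s := by
  have := le_max_right s 0
  have := le_max_right (-s) 0
  unfold asymE
  positivity

lemma asymE_neg (s : ℝ) : asymE p a b (-s) = asymE p b a s := by
  rw [asymE, asymE, neg_neg, add_comm]

lemma asymFlux_neg (s : ℝ) : asymFlux p a b (-s) = -asymFlux p b a s := by
  rw [asymFlux, asymFlux, neg_neg, neg_sub]

lemma max_mul_zero_rpow {c : ℝ} (hc : 0 ≤ c) (s q : ℝ) :
    max (c * s) 0 ^ q = c ^ q * max s 0 ^ q := by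
  rw [← Real.mul_rpow hc (le_max_right _ _), mul_max_of_nonneg _ _ hc, mul_zero]

lemma asymE_mul {c : ℝ} (hc : 0 ≤ c) (s : ℝ) : asymE p a b (c * s) = c ^ p * asymE p a b s := by
  rw [asymE, asymE, ← mul_neg, max_mul_zero_rpow hc, max_mul_zero_rpow hc]
  ring

lemma asymFlux_mul {c : ℝ} (hc : 0 ≤ c) (s : ℝ) :
    asymFlux p a b (c * s) = c ^ (p - 1) * asymFlux p a b s := by
  rw [asymFlux, asymFlux, ← mul_neg, max_mul_zero_rpow hc, max_mul_zero_rpow hc]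
  ring

lemma asymFlux_mul_self (hp : 1 < p) (s : ℝ) : asymFlux p a b s * s = asymE p a b s := by
  rw [asymE, ← max_zero_rpow_sub_one_mul hp s, ← max_zero_rpow_sub_one_mul hp (-s), asymFlux]
  ring

lemma continuous_asymE (hp : 0 ≤ p) : Continuous (asymE p a b) :=
  (((continuous_id.max continuous_const).rpow_const fun _ => Or.inr hp).const_mul _).add
    (((continuous_neg.max continuous_const).rpow_const fun _ => Or.inr hp).const_mul _)

lemma continuous_asymFlux (hp : 1 ≤ p) : Continuous (asymFlux p a b) :=
  have hp' : 0 ≤ p - 1 := sub_nonneg.2 hp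
  (((continuous_id.max continuous_const).rpow_const fun _ => Or.inr hp').const_mul _).sub
    (((continuous_neg.max continuous_const).rpow_const fun _ => Or.inr hp').const_mul _)

lemma asymFlux_strictMono (hp : 1 < p) (ha : 0 < a) (hb : 0 < b) :
    StrictMono (asymFlux p a b) := by
  have hp' : 0 < p - 1 := sub_pos.2 hp
  have hap : 0 < a ^ p := Real.rpow_pos_of_pos ha p
  have hbp : 0 < b ^ p := Real.rpow_pos_of_pos hb p
  have mono {x y : ℝ} (hxy : x ≤ y) : max x 0 ^ (p - 1) ≤ max y 0 ^ (p - 1) :=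
    Real.rpow_le_rpow (le_max_right _ _) (max_le_max_right 0 hxy) hp'.le
  have strictMono {x y : ℝ} (hxy : x < y) (hy : 0 < y) :
      max x 0 ^ (p - 1) < max y 0 ^ (p - 1) :=
    Real.rpow_lt_rpow (le_max_right _ _) (lt_max_of_lt_left (max_lt hxy hy)) hp'
  intro s t hst
  unfold asymFlux
  rcases lt_or_ge 0 t with ht | ht
  · linarith [mul_lt_mul_of_pos_left (strictMono hst ht) hap,
      mul_le_mul_of_nonneg_left (mono (neg_le_neg hst.le)) hbp.le]
  · linarith [mul_le_mul_of_nonneg_left (mono hst.le) hap.le,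
      mul_lt_mul_of_pos_left (strictMono (neg_lt_neg hst) (by linarith)) hbp]

lemma mul_rpow_sub_one_mul_le (hp : 1 < p) {s r : ℝ} (hs : 0 ≤ s) (hr : 0 ≤ r) :
    p * (s ^ (p - 1) * r) ≤ r ^ p + (p - 1) * s ^ p := by
  have hp0 : p ≠ 0 := by linarith
  have hp1 : p - 1 ≠ 0 := by linarith
  have young := Real.young_inequality_of_nonneg hr (Real.rpow_nonneg hs (p - 1))
    (Real.HolderConjugate.conjExponent hp)
  rw [Real.conjExponent, ← Real.rpow_mul hs, mul_div_cancel₀ _ hp1] at young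
  calc p * (s ^ (p - 1) * r) = p * (r * s ^ (p - 1)) := by ring
    _ ≤ p * (r ^ p / p + s ^ p / (p / (p - 1))) := by gcongr
    _ = r ^ p + (p - 1) * s ^ p := by field_simp

lemma mul_asymFlux_mul_le (hp : 1 < p) (ha : 0 ≤ a) (hb : 0 ≤ b) (s r : ℝ) :
    p * (asymFlux p a b s * r) ≤ asymE p a b r + (p - 1) * asymE p a b s := by
  have half (x y : ℝ) :
      p * (max x 0 ^ (p - 1) * y) ≤ max y 0 ^ p + (p - 1) * max x 0 ^ p :=
    calc p * (max x 0 ^ (p - 1) * y) ≤ p * (max x 0 ^ (p - 1) * max y 0) := by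
          gcongr
          exact le_max_left _ _
      _ ≤ max y 0 ^ p + (p - 1) * max x 0 ^ p :=
          mul_rpow_sub_one_mul_le hp (le_max_right _ _) (le_max_right _ _)
  have hpos := mul_le_mul_of_nonneg_left (half s r) (Real.rpow_nonneg ha p)
  have hneg := mul_le_mul_of_nonneg_left (half (-s) (-r)) (Real.rpow_nonneg hb p)
  unfold asymFlux asymE
  linarith

lemma asymFlux_mul_picone_le (hp : 1 < p) (ha : 0 ≤ a) (hb : 0 ≤ b) {x : ℝ} (hx : 0 ≤ x)
    (s r : ℝ) :
    asymFlux p a b s * (p * x ^ (p - 1) * r - (p - 1) * x ^ p * s) ≤ asymE p a b r := by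
  have young := mul_asymFlux_mul_le hp ha hb (x * s) r
  rw [asymFlux_mul hx, asymE_mul hx, ← asymFlux_mul_self hp s] at young
  linarith

end Integrand

section C1Functions

variable {α γ L : ℝ} {u u' v v' : ℝ → ℝ}

lemma C1On.continuousOn (h : C1On α γ u u') : ContinuousOn u (Icc α γ) :=
  fun t ht => (h.1 t ht).continuousWithinAt

lemma C1On.hasDerivAt (h : C1On α γ u u') {t : ℝ} (ht : t ∈ Ioo α γ) : HasDerivAt u (u' t) t :=
  (h.1 t (Ioo_subset_Icc_self ht)).hasDerivAt (Icc_mem_nhds ht.1 ht.2)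

lemma C1On.add_const (h : C1On α γ u u') (c : ℝ) : C1On α γ (fun t => u t + c) u' :=
  ⟨fun t ht => (h.1 t ht).add_const c, h.2⟩

lemma C1On.concaveOn_of_antitoneOn (h : C1On α γ u u') (hanti : AntitoneOn u' (Icc α γ)) :
    ConcaveOn ℝ (Icc α γ) u := by
  refine AntitoneOn.concaveOn_of_deriv (convex_Icc _ _) h.continuousOn ?_ ?_ <;>
    rw [interior_Icc]
  · exact fun t ht => (h.hasDerivAt ht).differentiableAt.differentiableWithinAt
  · exact (hanti.mono Ioo_subset_Icc_self).congr fun t ht => (h.hasDerivAt ht).deriv.symm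

lemma C1On.integral_mul_deriv (hαγ : α ≤ γ) (hu : C1On α γ u u') (hv : C1On α γ v v') :
    ∫ t in α..γ, u t * v' t = u γ * v γ - u α * v α - ∫ t in α..γ, u' t * v t := by
  refine intervalIntegral.integral_mul_deriv_eq_deriv_mul_of_hasDerivWithinAt
    ?_ ?_ (hu.2.intervalIntegrable_of_Icc hαγ) (hv.2.intervalIntegrable_of_Icc hαγ) <;>
    rw [uIcc_of_le hαγ]
  exacts [hu.1, hv.1]

lemma c1On_integral {f : ℝ → ℝ} (hf : ContinuousOn f (Icc α γ)) :
    C1On α γ (fun t => ∫ x in α..t, f x) f := by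
  refine ⟨fun t ht => ?_, hf⟩
  have : Fact (t ∈ Icc α γ) := ⟨ht⟩
  exact intervalIntegral.integral_hasDerivWithinAt_right
    ((hf.mono (Icc_subset_Icc_right ht.2)).intervalIntegrable_of_Icc ht.1)
    (hf.stronglyMeasurableAtFilter_nhdsWithin measurableSet_Icc t) (hf t ht)

lemma Adm.nonneg_of_nonneg_on_Ioo (h : Adm L u u') (hIoo : ∀ t ∈ Ioo 0 L, 0 ≤ u t) :
    ∀ t ∈ Icc 0 L, 0 ≤ u t := by
  intro t ht
  rcases eq_endpoints_or_mem_Ioo_of_mem_Icc ht with rfl | rfl | ht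
  exacts [h.2.1.ge, h.2.2.ge, hIoo t ht]

lemma Adm.const_mul (h : Adm L u u') (c : ℝ) : Adm L (fun t => c * u t) (fun t => c * u' t) :=
  ⟨⟨fun t ht => (h.1.1 t ht).const_mul c, h.1.2.const_mul c⟩, by simp [h.2.1], by simp [h.2.2]⟩

lemma Adm.neg (h : Adm L u u') : Adm L (fun t => -u t) (fun t => -u' t) := by
  simpa using h.const_mul (-1)

lemma sub_mem_Icc_zero {t : ℝ} (ht : t ∈ Icc 0 L) : L - t ∈ Icc 0 L :=
  ⟨sub_nonneg.2 ht.2, sub_le_self L ht.1⟩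

lemma Adm.reflect (h : Adm L u u') : Adm L (fun t => u (L - t)) (fun t => -u' (L - t)) := by
  refine ⟨⟨fun t ht => ?_, ?_⟩, by simpa using h.2.2, by simpa using h.2.1⟩
  · simpa [Function.comp_def] using (h.1.1 (L - t) (sub_mem_Icc_zero ht)).comp t
      ((hasDerivAt_id t).const_sub L).hasDerivWithinAt fun _ => sub_mem_Icc_zero
  · exact (h.1.2.comp (by fun_prop) fun _ => sub_mem_Icc_zero).neg

/-- The du Bois-Reymond lemma. -/
lemma exists_eq_const_of_integral_mul_deriv_eq_zero (hL : 0 < L) {H : ℝ → ℝ}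
    (hH : ContinuousOn H (Icc 0 L))
    (h : ∀ φ φ' : ℝ → ℝ, Adm L φ φ' → ∫ t in 0..L, H t * φ' t = 0) :
    ∃ c, ∀ t ∈ Icc 0 L, H t = c := by
  set c := (∫ t in 0..L, H t) / L with hc
  have hk : ContinuousOn (fun t => H t - c) (Icc 0 L) := hH.sub continuousOn_const
  have mean_zero : ∫ t in 0..L, (H t - c) = 0 := by
    rw [intervalIntegral.integral_sub (hH.intervalIntegrable_of_Icc hL.le)
      intervalIntegrable_const, intervalIntegral.integral_const, hc, smul_eq_mul, sub_zero,
      mul_div_cancel₀ _ hL.ne', sub_self]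
  have adm : Adm L (fun t => ∫ x in 0..t, (H x - c)) (fun t => H t - c) :=
    ⟨c1On_integral hk, intervalIntegral.integral_same, mean_zero⟩
  have sq_zero : ∫ t in 0..L, (H t - c) * (H t - c) = 0 := by
    simp_rw [sub_mul _ c]
    rw [intervalIntegral.integral_sub ((hH.fun_mul hk).intervalIntegrable_of_Icc hL.le)
      ((hk.const_mul c).intervalIntegrable_of_Icc hL.le), h _ _ adm,
      intervalIntegral.integral_const_mul, mean_zero, mul_zero, sub_zero]
  refine ⟨c, fun t ht => by_contra fun hne => sq_zero.not_gt ?_⟩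
  exact intervalIntegral.integral_pos hL (hk.mul hk) (fun _ _ => mul_self_nonneg _)
    ⟨t, ht, mul_self_pos.2 (sub_ne_zero.2 hne)⟩

end C1Functions

lemma concaveOn_pos_of_mem_Ioo {α γ : ℝ} {f : ℝ → ℝ} (hf : ConcaveOn ℝ (Icc α γ) f)
    (hα : 0 ≤ f α) (hγ : 0 ≤ f γ) (hpos : ∃ c ∈ Icc α γ, 0 < f c) {t : ℝ} (ht : t ∈ Ioo α γ) :
    0 < f t := by
  obtain ⟨c, hc, hfc⟩ := hpos
  have hαγ : α ≤ γ := (ht.1.trans ht.2).le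
  by_contra! hft
  rcases lt_trichotomy t c with htc | rfl | hct
  · have := hf.left_lt_of_lt_right (left_mem_Icc.2 hαγ) hc
      (openSegment_eq_Ioo (ht.1.trans htc) ▸ ⟨ht.1, htc⟩) (hft.trans_lt hfc)
    linarith
  · linarith
  · have := hf.lt_right_of_left_lt hc (right_mem_Icc.2 hαγ)
      (openSegment_eq_Ioo (hct.trans ht.2) ▸ ⟨hct, ht.2⟩) (hft.trans_lt hfc)
    linarith

section PiconeTest

variable {p α γ : ℝ} {w w' v v' : ℝ → ℝ}

/-- The test function `(v⁺)^p / w^(p - 1)` of Picone's inequality. -/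
noncomputable def piconeTest (p : ℝ) (w v : ℝ → ℝ) (t : ℝ) : ℝ :=
  max (v t) 0 ^ p / w t ^ (p - 1)

/-- The derivative of `piconeTest p w v`, where `w'` and `v'` stand for the derivatives of `w` and
`v`. It is written in terms of `v⁺ / w` to match the pointwise Picone inequality. -/
noncomputable def piconeTestDeriv (p : ℝ) (w w' v v' : ℝ → ℝ) (t : ℝ) : ℝ :=
  p * (max (v t) 0 / w t) ^ (p - 1) * v' t - (p - 1) * (max (v t) 0 / w t) ^ p * w' t

lemma piconeTest_eq_zero (hp : p ≠ 0) {t : ℝ} (hv : v t ≤ 0) : piconeTest p w v t = 0 := by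
  rw [piconeTest, max_eq_right hv, Real.zero_rpow hp, zero_div]

lemma piconeTestDeriv_eq_zero (hp : 1 < p) {t : ℝ} (hv : v t ≤ 0) :
    piconeTestDeriv p w w' v v' t = 0 := by
  rw [piconeTestDeriv, max_eq_right hv, zero_div, Real.zero_rpow (by linarith),
    Real.zero_rpow (by linarith)]
  ring

lemma hasDerivWithinAt_piconeTest (hp : 1 < p) {s : Set ℝ} {t : ℝ} (hwt : 0 < w t)
    (hw : HasDerivWithinAt w (w' t) s t) (hv : HasDerivWithinAt v (v' t) s t) :
    HasDerivWithinAt (piconeTest p w v) (piconeTestDeriv p w w' v v' t) s t := by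
  have hnum := (hasDerivAt_max_zero_rpow hp (v t)).comp_hasDerivWithinAt t hv
  have hden := hw.rpow_const (p := p - 1) (Or.inl hwt.ne')
  refine (hnum.div hden (Real.rpow_pos_of_pos hwt _).ne').congr_deriv ?_
  have hv0 : 0 ≤ max (v t) 0 := le_max_right _ _
  have hw1 : w t ^ (p - 1 - 1) = w t ^ (p - 1) / w t := Real.rpow_sub_one hwt.ne' _
  have hwp : w t ^ p = w t ^ (p - 1) * w t := by
    rw [← Real.rpow_add_one hwt.ne', sub_add_cancel]
  have hq : w t ^ (p - 1) ≠ 0 := (Real.rpow_pos_of_pos hwt _).ne'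
  rw [piconeTestDeriv, Real.div_rpow hv0 hwt.le, Real.div_rpow hv0 hwt.le, hwp, hw1]
  simp only [Function.comp_apply]
  field_simp

lemma C1On.piconeTest (hp : 1 < p) (hw : C1On α γ w w') (hwpos : ∀ t ∈ Icc α γ, 0 < w t)
    (hv : C1On α γ v v') :
    C1On α γ (piconeTest p w v) (piconeTestDeriv p w w' v v') := by
  refine ⟨fun t ht => hasDerivWithinAt_piconeTest hp (hwpos t ht) (hw.1 t ht) (hv.1 t ht), ?_⟩
  have hquot : ContinuousOn (fun t => max (v t) 0 / w t) (Icc α γ) :=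
    (hv.continuousOn.sup continuousOn_const).div hw.continuousOn fun t ht => (hwpos t ht).ne'
  have hpow {q : ℝ} (hq : 0 ≤ q) : ContinuousOn (fun t => (max (v t) 0 / w t) ^ q) (Icc α γ) :=
    hquot.rpow_const fun _ _ => Or.inr hq
  exact (((hpow (by linarith)).const_mul p).mul hv.2).sub
    (((hpow (by linarith)).const_mul (p - 1)).mul hw.2)

lemma Adm.piconeTest {L : ℝ} (hp : 1 < p) (hw : C1On 0 L w w')
    (hwpos : ∀ t ∈ Icc 0 L, 0 < w t) (hv : Adm L v v') :
    Adm L (piconeTest p w v) (piconeTestDeriv p w w' v v') :=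
  have hp0 : p ≠ 0 := by linarith
  ⟨hw.piconeTest hp hwpos hv.1, piconeTest_eq_zero hp0 hv.2.1.le,
    piconeTest_eq_zero hp0 hv.2.2.le⟩

-- At each point only one of the two terms survives, according to the sign of `v t`.
lemma asymFlux_mul_piconeTestDeriv_add_le {a b : ℝ} (hp : 1 < p) (ha : 0 ≤ a) (hb : 0 ≤ b)
    {w₁ w₁' w₂ w₂' : ℝ → ℝ} {t : ℝ} (h₁ : 0 ≤ w₁ t) (h₂ : 0 ≤ w₂ t) :
    asymFlux p a b (w₁' t) * piconeTestDeriv p w₁ w₁' v v' t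
      + asymFlux p b a (w₂' t) * piconeTestDeriv p w₂ w₂' (fun t => -v t) (fun t => -v' t) t
      ≤ asymE p a b (v' t) := by
  rcases le_total 0 (v t) with hv | hv
  · rw [piconeTestDeriv_eq_zero hp (v := fun t => -v t) (neg_nonpos.2 hv), mul_zero, add_zero]
    exact asymFlux_mul_picone_le hp ha hb (div_nonneg (le_max_right _ _) h₁) _ _
  · rw [piconeTestDeriv_eq_zero hp (v := v) hv, mul_zero, zero_add, ← asymE_neg]
    exact asymFlux_mul_picone_le hp hb ha (div_nonneg (le_max_right _ _) h₂) _ _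

lemma rpow_mul_piconeTest_le (hp : 1 ≤ p) {x t : ℝ} (hx : 0 ≤ x) (hwt : 0 < w t)
    (hxw : x ≤ w t) : x ^ (p - 1) * piconeTest p w v t ≤ max (v t) 0 ^ p := by
  have hle : x ^ (p - 1) ≤ w t ^ (p - 1) := Real.rpow_le_rpow hx hxw (by linarith)
  rw [piconeTest, mul_div_assoc', div_le_iff₀ (Real.rpow_pos_of_pos hwt _), mul_comm]
  exact mul_le_mul_of_nonneg_left hle (Real.rpow_nonneg (le_max_right _ _) _)

open Filter Topology in
lemma tendsto_rpow_mul_piconeTest {u : ℝ → ℝ} {t : ℝ} (hut : 0 < u t) :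
    Tendsto (fun ε => u t ^ (p - 1) * piconeTest p (fun s => u s + ε) v t) (𝓝[>] 0)
      (𝓝 (max (v t) 0 ^ p)) := by
  have hne : u t ^ (p - 1) ≠ 0 := (Real.rpow_pos_of_pos hut _).ne'
  have hden : ContinuousAt (fun ε => (u t + ε) ^ (p - 1)) 0 :=
    (continuousAt_const.add continuousAt_id).rpow_const (Or.inl (by simpa using hut.ne'))
  have hcont : ContinuousAt (fun ε => u t ^ (p - 1) * (max (v t) 0 ^ p / (u t + ε) ^ (p - 1))) 0 :=
    (continuousAt_const.div hden (by simpa using hne)).const_mul _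
  simpa [ContinuousAt, piconeTest, mul_div_cancel₀ _ hne] using hcont.mono_left nhdsWithin_le_nhds

open Filter Topology MeasureTheory in
lemma tendsto_integral_rpow_mul_piconeTest (hp : 1 ≤ p) (hαγ : α ≤ γ) {u : ℝ → ℝ}
    (hu : ContinuousOn u (Icc α γ)) (hv : ContinuousOn v (Icc α γ))
    (hu0 : ∀ t ∈ Icc α γ, 0 ≤ u t) (hpos : ∀ t ∈ Ioo α γ, 0 < u t) :
    Tendsto (fun ε => ∫ t in α..γ, u t ^ (p - 1) * piconeTest p (fun s => u s + ε) v t) (𝓝[>] 0)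
      (𝓝 (∫ t in α..γ, max (v t) 0 ^ p)) := by
  have hvp : ContinuousOn (fun t => max (v t) 0 ^ p) (Icc α γ) :=
    (hv.sup continuousOn_const).rpow_const fun _ _ => Or.inr (by linarith)
  refine intervalIntegral.tendsto_integral_filter_of_dominated_convergence
    (fun t => max (v t) 0 ^ p) ?_ ?_ (hvp.intervalIntegrable_of_Icc hαγ) ?_ <;>
    simp only [uIoc_of_le hαγ]
  · filter_upwards [self_mem_nhdsWithin] with ε (hε : 0 < ε)
    have hshift : ∀ t ∈ Icc α γ, 0 < u t + ε := fun t ht => add_pos_of_nonneg_of_pos (hu0 t ht) hε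
    have hcont : ContinuousOn (fun t => u t ^ (p - 1) * piconeTest p (fun s => u s + ε) v t)
        (Icc α γ) :=
      (hu.rpow_const fun _ _ => Or.inr (by linarith)).mul <| hvp.div
        ((hu.add continuousOn_const).rpow_const fun t ht => Or.inl (hshift t ht).ne')
        fun t ht => (Real.rpow_pos_of_pos (hshift t ht) _).ne'
    exact (hcont.mono Ioc_subset_Icc_self).aestronglyMeasurable measurableSet_Ioc
  · filter_upwards [self_mem_nhdsWithin] with ε (hε : 0 < ε)
    refine Eventually.of_forall fun t ht => ?_
    have hut := hu0 t (Ioc_subset_Icc_self ht)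
    have htest : 0 ≤ piconeTest p (fun s => u s + ε) v t :=
      div_nonneg (Real.rpow_nonneg (le_max_right _ _) _) (Real.rpow_nonneg (by linarith) _)
    rw [Real.norm_of_nonneg (mul_nonneg (Real.rpow_nonneg hut _) htest)]
    exact rpow_mul_piconeTest_le hp hut (by linarith) (by linarith)
  · filter_upwards [Measure.ae_ne volume γ] with t htγ ht
    exact tendsto_rpow_mul_piconeTest (hpos t ⟨ht.1, ht.2.lt_of_ne htγ⟩)

end PiconeTest

lemma lam1_eq_of_rayleigh_minimizer {p a b L lam : ℝ} (hp : 0 < p) {u u' : ℝ → ℝ}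
    (hu : Adm L u u') (hpos : 0 < ∫ t in 0..L, |u t| ^ p)
    (heq : ∫ t in 0..L, asymE p a b (u' t) = lam * ∫ t in 0..L, |u t| ^ p)
    (hle : ∀ v v' : ℝ → ℝ, Adm L v v' →
      lam * ∫ t in 0..L, |v t| ^ p ≤ ∫ t in 0..L, asymE p a b (v' t)) :
    lam1 p a b L = lam := by
  set I := ∫ t in 0..L, |u t| ^ p with hI
  set c := I⁻¹ ^ p⁻¹
  have hc0 : 0 ≤ c := Real.rpow_nonneg (inv_nonneg.2 hpos.le) _
  have hcp : c ^ p = I⁻¹ := Real.rpow_inv_rpow (inv_nonneg.2 hpos.le) hp.ne'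
  refine IsLeast.csInf_eq ⟨⟨_, _, hu.const_mul c, ?_, ?_⟩, ?_⟩
  · simp_rw [abs_mul, abs_of_nonneg hc0, Real.mul_rpow hc0 (abs_nonneg _)]
    rw [intervalIntegral.integral_const_mul, hcp, ← hI, inv_mul_cancel₀ hpos.ne']
  · simp_rw [asymE_mul hc0]
    rw [intervalIntegral.integral_const_mul, hcp, heq, mul_left_comm, inv_mul_cancel₀ hpos.ne',
      mul_one]
  · rintro E ⟨v, v', hv, hnorm, rfl⟩
    simpa only [hnorm, mul_one] using hle v v' hv

namespace IsWeakSol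

variable {p a b L lam : ℝ} {u u' w w' v v' g h : ℝ → ℝ}

lemma congr (hL : 0 ≤ L) (hu : IsWeakSol p a b L u u' g) (hgh : EqOn g h (Icc 0 L)) :
    IsWeakSol p a b L u u' h := by
  refine ⟨hu.1, fun φ φ' hφ => (hu.2 φ φ' hφ).trans ?_⟩
  refine intervalIntegral.integral_congr fun t ht => ?_
  rw [uIcc_of_le hL] at ht
  simp only [hgh ht]

lemma neg (hu : IsWeakSol p a b L u u' g) :
    IsWeakSol p b a L (fun t => -u t) (fun t => -u' t) (fun t => -g t) := by
  refine ⟨hu.1.neg, fun φ φ' hφ => ?_⟩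
  simp_rw [asymFlux_neg, neg_mul, intervalIntegral.integral_neg, hu.2 φ φ' hφ]

lemma reflect (hu : IsWeakSol p a b L u u' g) :
    IsWeakSol p b a L (fun t => u (L - t)) (fun t => -u' (L - t)) (fun t => g (L - t)) := by
  refine ⟨hu.1.reflect, fun φ φ' hφ => ?_⟩
  calc ∫ t in 0..L, asymFlux p b a (-u' (L - t)) * φ' t
      = ∫ t in 0..L, asymFlux p a b (u' (L - t)) * -φ' (L - (L - t)) := by
        simp only [asymFlux_neg, sub_sub_cancel, neg_mul, mul_neg]
    _ = ∫ t in 0..L, asymFlux p a b (u' t) * -φ' (L - t) := by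
        simpa only [sub_self, sub_zero] using intervalIntegral.integral_comp_sub_left
          (a := 0) (b := L) (fun t => asymFlux p a b (u' t) * -φ' (L - t)) L
    _ = ∫ t in 0..L, g t * φ (L - t) := hu.2 _ _ hφ.reflect
    _ = ∫ t in 0..L, g (L - t) * φ t := by
        simpa only [sub_self, sub_zero, sub_sub_cancel] using
          (intervalIntegral.integral_comp_sub_left
            (a := 0) (b := L) (fun t => g t * φ (L - t)) L).symm

lemma integral_asymE (hp : 1 < p) (hu : IsWeakSol p a b L u u' g) :
    ∫ t in 0..L, asymE p a b (u' t) = ∫ t in 0..L, g t * u t := by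
  simp_rw [← asymFlux_mul_self hp, hu.2 u u' hu.1]

lemma continuousOn_asymFlux (hp : 1 ≤ p) (hu : IsWeakSol p a b L u u' g) :
    ContinuousOn (fun t => asymFlux p a b (u' t)) (Icc 0 L) :=
  (continuous_asymFlux hp).comp_continuousOn hu.1.1.2

lemma exists_asymFlux_add_integral_eq (hp : 1 ≤ p) (hL : 0 < L)
    (hu : IsWeakSol p a b L u u' g) (hg : ContinuousOn g (Icc 0 L)) :
    ∃ c, ∀ t ∈ Icc 0 L, asymFlux p a b (u' t) + ∫ x in 0..t, g x = c := by
  have hflux := hu.continuousOn_asymFlux hp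
  have hG : C1On 0 L (fun t => ∫ x in 0..t, g x) g := c1On_integral hg
  refine exists_eq_const_of_integral_mul_deriv_eq_zero hL (hflux.add hG.continuousOn)
    fun φ φ' hφ => ?_
  simp_rw [add_mul]
  rw [intervalIntegral.integral_add ((hflux.fun_mul hφ.1.2).intervalIntegrable_of_Icc hL.le)
      ((hG.continuousOn.fun_mul hφ.1.2).intervalIntegrable_of_Icc hL.le),
    hu.2 φ φ' hφ, hG.integral_mul_deriv hL.le hφ.1, hφ.2.1, hφ.2.2]
  ring

lemma antitoneOn_deriv (hp : 1 < p) (ha : 0 < a) (hb : 0 < b) (hL : 0 < L)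
    (hu : IsWeakSol p a b L u u' g) (hg : ContinuousOn g (Icc 0 L))
    (hg0 : ∀ t ∈ Icc 0 L, 0 ≤ g t) : AntitoneOn u' (Icc 0 L) := by
  obtain ⟨c, hc⟩ := hu.exists_asymFlux_add_integral_eq hp.le hL hg
  intro s hs t ht hst
  have hint {x y : ℝ} (hx : x ∈ Icc 0 L) (hy : y ∈ Icc 0 L) :
      IntervalIntegrable g MeasureTheory.volume x y :=
    (hg.mono (ordConnected_Icc.uIcc_subset hx hy)).intervalIntegrable
  have hsplit := intervalIntegral.integral_add_adjacent_intervals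
    (hint (left_mem_Icc.2 hL.le) hs) (hint hs ht)
  have hnonneg : 0 ≤ ∫ x in s..t, g x := intervalIntegral.integral_nonneg hst
    fun x hx => hg0 x ⟨hs.1.trans hx.1, hx.2.trans ht.2⟩
  refine (asymFlux_strictMono hp ha hb).le_iff_le.1 ?_
  linarith [hc s hs, hc t ht]

lemma pos_on_Ioo (hp : 1 < p) (ha : 0 < a) (hb : 0 < b) (hL : 0 < L)
    (hu : IsWeakSol p a b L u u' g) (hg : ContinuousOn g (Icc 0 L))
    (hg0 : ∀ t ∈ Icc 0 L, 0 ≤ g t) (hpos : ∃ t ∈ Icc 0 L, 0 < u t) :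
    ∀ t ∈ Ioo 0 L, 0 < u t := fun _ =>
  have hanti := hu.antitoneOn_deriv hp ha hb hL hg hg0
  concaveOn_pos_of_mem_Ioo (hu.1.1.concaveOn_of_antitoneOn hanti) hu.1.2.1.ge hu.1.2.2.ge hpos

lemma integral_mul_piconeTest_add_le (hp : 1 < p) (ha : 0 ≤ a) (hb : 0 ≤ b) (hL : 0 ≤ L)
    {ε : ℝ} (hε : 0 < ε) (hu : IsWeakSol p a b L u u' g) (hu0 : ∀ t ∈ Icc 0 L, 0 ≤ u t)
    (hw : IsWeakSol p b a L w w' h) (hw0 : ∀ t ∈ Icc 0 L, 0 ≤ w t) (hv : Adm L v v') :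
    (∫ t in 0..L, g t * piconeTest p (fun s => u s + ε) v t) +
        ∫ t in 0..L, h t * piconeTest p (fun s => w s + ε) (fun s => -v s) t
      ≤ ∫ t in 0..L, asymE p a b (v' t) := by
  have admU := Adm.piconeTest hp (hu.1.1.add_const ε) (fun t ht => by linarith [hu0 t ht]) hv
  have admW := Adm.piconeTest hp (hw.1.1.add_const ε) (fun t ht => by linarith [hw0 t ht]) hv.neg
  have intU := ((hu.continuousOn_asymFlux hp.le).fun_mul admU.1.2).intervalIntegrable_of_Icc
    (μ := MeasureTheory.volume) hL
  have intW := ((hw.continuousOn_asymFlux hp.le).fun_mul admW.1.2).intervalIntegrable_of_Icc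
    (μ := MeasureTheory.volume) hL
  have intE : IntervalIntegrable (fun t => asymE p a b (v' t)) MeasureTheory.volume 0 L :=
    ((continuous_asymE (by linarith)).comp_continuousOn hv.1.2).intervalIntegrable_of_Icc hL
  rw [← hu.2 _ _ admU, ← hw.2 _ _ admW, ← intervalIntegral.integral_add intU intW]
  refine intervalIntegral.integral_mono_on hL (intU.add intW) intE fun t ht => ?_
  exact asymFlux_mul_piconeTestDeriv_add_le hp ha hb (by linarith [hu0 t ht])
    (by linarith [hw0 t ht])

open Filter Topology in
lemma mul_integral_abs_rpow_le (hp : 1 < p) (ha : 0 ≤ a) (hb : 0 ≤ b) (hL : 0 ≤ L)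
    (hu : IsWeakSol p a b L u u' fun t => lam * u t ^ (p - 1))
    (hupos : ∀ t ∈ Ioo 0 L, 0 < u t) (hv : Adm L v v') :
    lam * ∫ t in 0..L, |v t| ^ p ≤ ∫ t in 0..L, asymE p a b (v' t) := by
  have hw := hu.reflect
  have hu0 := hu.1.nonneg_of_nonneg_on_Ioo fun t ht => (hupos t ht).le
  have hw0 : ∀ t ∈ Icc 0 L, 0 ≤ u (L - t) := fun t ht => hu0 _ (sub_mem_Icc_zero ht)
  have hwpos : ∀ t ∈ Ioo 0 L, 0 < u (L - t) := fun t ht =>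
    hupos _ ⟨sub_pos.2 ht.2, sub_lt_self L ht.1⟩
  have picone : ∀ᶠ ε in 𝓝[>] (0 : ℝ),
      lam * (∫ t in 0..L, u t ^ (p - 1) * piconeTest p (fun s => u s + ε) v t) +
        lam * (∫ t in 0..L, u (L - t) ^ (p - 1) *
          piconeTest p (fun s => u (L - s) + ε) (fun s => -v s) t)
      ≤ ∫ t in 0..L, asymE p a b (v' t) := by
    filter_upwards [self_mem_nhdsWithin] with ε hε
    simpa only [mul_assoc, intervalIntegral.integral_const_mul] using
      hu.integral_mul_piconeTest_add_le hp ha hb hL hε hu0 hw hw0 hv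
  have limU := tendsto_integral_rpow_mul_piconeTest hp.le hL hu.1.1.continuousOn
    hv.1.continuousOn hu0 hupos
  have limW := tendsto_integral_rpow_mul_piconeTest hp.le hL hw.1.1.continuousOn
    hv.neg.1.continuousOn hw0 hwpos
  have hint {f : ℝ → ℝ} (hf : ContinuousOn f (Icc 0 L)) :
      IntervalIntegrable (fun t => max (f t) 0 ^ p) MeasureTheory.volume 0 L :=
    ((hf.sup continuousOn_const).rpow_const
      fun _ _ => Or.inr (by linarith)).intervalIntegrable_of_Icc hL
  simp_rw [← max_zero_rpow_add_max_neg_zero_rpow (by linarith : p ≠ 0)]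
  rw [intervalIntegral.integral_add (hint hv.1.continuousOn) (hint hv.neg.1.continuousOn), mul_add]
  exact le_of_tendsto ((limU.const_mul lam).add (limW.const_mul lam)) picone

lemma lam1_eq_of_nonneg (hp : 1 < p) (ha : 0 < a) (hb : 0 < b) (hL : 0 < L)
    (hu : IsWeakSol p a b L u u' fun t => lam * u t ^ (p - 1))
    (hu0 : ∀ t ∈ Icc 0 L, 0 ≤ u t) (hne : ∃ t ∈ Icc 0 L, u t ≠ 0) :
    lam1 p a b L = lam := by
  obtain ⟨t₀, ht₀, hut₀⟩ := hne
  have hcont := hu.1.1.continuousOn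
  have norm_pos : 0 < ∫ t in 0..L, |u t| ^ p :=
    intervalIntegral.integral_pos hL (hcont.abs.rpow_const fun _ _ => Or.inr (by linarith))
      (fun _ _ => Real.rpow_nonneg (abs_nonneg _) _)
      ⟨t₀, ht₀, Real.rpow_pos_of_pos (abs_pos.2 hut₀) _⟩
  have energy : ∫ t in 0..L, asymE p a b (u' t) = lam * ∫ t in 0..L, |u t| ^ p := by
    rw [hu.integral_asymE hp, ← intervalIntegral.integral_const_mul]
    refine intervalIntegral.integral_congr fun t ht => ?_
    have hut := hu0 t (uIcc_of_le hL.le ▸ ht)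
    simpa only [max_eq_left hut, mul_assoc, abs_of_nonneg hut] using
      congrArg (lam * ·) (max_zero_rpow_sub_one_mul hp (u t))
  have lam_nonneg : 0 ≤ lam := by
    refine nonneg_of_mul_nonneg_left ?_ norm_pos
    exact energy ▸ intervalIntegral.integral_nonneg hL.le fun _ _ => asymE_nonneg ha.le hb.le _
  have u_pos : ∀ t ∈ Ioo 0 L, 0 < u t := hu.pos_on_Ioo hp ha hb hL
    ((hcont.rpow_const fun _ _ => Or.inr (by linarith)).const_mul lam)
    (fun t ht => mul_nonneg lam_nonneg (Real.rpow_nonneg (hu0 t ht) _))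
    ⟨t₀, ht₀, (hu0 t₀ ht₀).lt_of_ne' hut₀⟩
  exact lam1_eq_of_rayleigh_minimizer (by linarith) hu.1 norm_pos energy
    fun v v' hv => hu.mul_integral_abs_rpow_le hp ha.le hb.le hL.le u_pos hv

end IsWeakSol

theorem stmt12 (p a b L : ℝ) (hp : 1 < p) (ha : 0 < a) (hb : 0 < b) (hL : 0 < L)
    (lam : ℝ) (hlam : lam ≠ lam1 p a b L) (u u' : ℝ → ℝ)
    (hsol : IsWeakSol p a b L u u' (fun t => lam * |u t| ^ (p - 2) * u t))
    (hne : ∃ t ∈ Set.Icc (0:ℝ) L, u t ≠ 0) :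
    (∃ t₁ ∈ Set.Ioo (0:ℝ) L, 0 < u t₁) ∧ (∃ t₂ ∈ Set.Ioo (0:ℝ) L, u t₂ < 0) := by
  constructor <;> by_contra! hsign
  · have nonneg : ∀ t ∈ Icc 0 L, 0 ≤ -u (L - t) := fun t ht =>
      hsol.1.neg.nonneg_of_nonneg_on_Ioo (fun s hs => neg_nonneg.2 (hsign s hs)) _
        (sub_mem_Icc_zero ht)
    have hrefl := hsol.reflect.neg.congr (h := fun t => lam * (-u (L - t)) ^ (p - 1)) hL.le
      fun t ht => by simp only [← abs_rpow_sub_two_mul hp (nonneg t ht), abs_neg]; ring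
    obtain ⟨t, ht, hut⟩ := hne
    exact hlam (hrefl.lam1_eq_of_nonneg hp ha hb hL nonneg
      ⟨L - t, sub_mem_Icc_zero ht, by simpa only [sub_sub_cancel, neg_ne_zero] using hut⟩).symm
  · have nonneg := hsol.1.nonneg_of_nonneg_on_Ioo hsign
    have hpow := hsol.congr (h := fun t => lam * u t ^ (p - 1)) hL.le fun t ht => by
      simp only [mul_assoc, abs_rpow_sub_two_mul hp (nonneg t ht)]
    exact hlam (hpow.lam1_eq_of_nonneg hp ha hb hL nonneg hne).symm
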